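/- Let (X,T) be a minimal topological dynamical system given by a continuous ℤ^d-action on a compact metric space and let f ∈ C(X). Then (X,T) is either f-mean equicontinuous or f-mean sensitive. -/

import Mathlib

open MeasureTheory Filter Finset Metric
open scoped Classical

noncomputable section

/-- The box `{0,…,n−1}^d` inside `ℤ^d`. -/
def Fbox (d n : ℕ) : Finset (Fin d → ℤ) :=
  Fintype.piFinset fun _ => Finset.Icc (0 : ℤ) ((n : ℤ) - 1)

/-- Upper density of a subset of `ℤ^d` along the boxes `F_n`. -/
def upperDensity (d : ℕ) (S : Set (Fin d → ℤ)) : ℝ :=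
  Filter.limsup
    (fun n : ℕ => (((Fbox d n).filter (fun j => j ∈ S)).card : ℝ) / ((Fbox d n).card : ℝ))
    Filter.atTop

/-- Lower density of a subset of `ℤ^d` along the boxes `F_n`. -/
def lowerDensity (d : ℕ) (S : Set (Fin d → ℤ)) : ℝ :=
  Filter.liminf
    (fun n : ℕ => (((Fbox d n).filter (fun j => j ∈ S)).card : ℝ) / ((Fbox d n).card : ℝ))
    Filter.atTop

variable {X : Type*}

/-- The pseudometric `ρ_f(x,y) = inf {ε > 0 : D̄({i : |f(T^i x) − f(T^i y)| > ε}) < ε}`. -/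
def rhoF {d : ℕ} (T : (Fin d → ℤ) → X → X) (f : X → ℂ) (x y : X) : ℝ :=
  sInf {ε : ℝ | 0 < ε ∧ upperDensity d {i | ε < ‖f (T i x) - f (T i y)‖} < ε}

/-!
A box and its translate by a fixed `j` overlap in a proportion of points tending to `1`, so upper
density, and hence `ρ_f`, is invariant under translation. If the system is not `f`-mean sensitive,
then for each `ε > 0` some nonempty open `U` satisfies `ρ_f ≤ ε` on `U × U`. By minimality a
translate `T^j` carries any given point, and by continuity a neighbourhood of it, into `U`;
invariance of `ρ_f` then pulls the bound `ρ_f ≤ ε` back to that neighbourhood.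
-/

open scoped Topology

section RelDensity

variable {G : Type*}

/-- The proportion of the finite set `F` that lies in `S`, so that `upperDensity d S` is the
`limsup` of `relDensity (Fbox d n) S`. It is `0` when `F` is empty. -/
def relDensity (F : Finset G) (S : Set G) : ℝ :=
  (#{i ∈ F | i ∈ S} : ℝ) / #F

lemma relDensity_nonneg (F : Finset G) (S : Set G) : 0 ≤ relDensity F S := by
  unfold relDensity
  positivity

lemma relDensity_le_one (F : Finset G) (S : Set G) : relDensity F S ≤ 1 :=
  div_le_one_of_le₀ (mod_cast card_filter_le _ _) (Nat.cast_nonneg _)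

variable [AddGroup G]

lemma card_filter_add_card_filter_sub_mem_le (F : Finset G) (S : Set G) (j : G) :
    #{i ∈ F | i ∈ S} + #{i ∈ F | i - j ∈ F} ≤ #{i ∈ F | i + j ∈ S} + #F := by
  have card_inter_le : #({i ∈ F | i ∈ S} ∩ {i ∈ F | i - j ∈ F}) ≤ #{i ∈ F | i + j ∈ S} := by
    refine card_le_card_of_injOn (· - j) (fun i hi => ?_) sub_left_injective.injOn
    simp only [coe_inter, coe_filter, Set.mem_inter_iff, Set.mem_ofPred_eq] at hi
    simpa using ⟨hi.2.2, hi.1.2⟩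
  have card_union_le : #({i ∈ F | i ∈ S} ∪ {i ∈ F | i - j ∈ F}) ≤ #F :=
    card_le_card (union_subset (filter_subset _ _) (filter_subset _ _))
  have := card_union_add_card_inter {i ∈ F | i ∈ S} {i ∈ F | i - j ∈ F}
  omega

lemma relDensity_le_relDensity_preimage_add (F : Finset G) (S : Set G) (j : G) :
    relDensity F S ≤ relDensity F ((· + j) ⁻¹' S) + (1 - relDensity F {i | i - j ∈ F}) := by
  obtain rfl | hF := F.eq_empty_or_nonempty
  · simp [relDensity]
  have card_pos : (0 : ℝ) < #F := mod_cast hF.card_pos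
  have card_le : (#{i ∈ F | i ∈ S} + #{i ∈ F | i - j ∈ F} : ℝ) ≤ #{i ∈ F | i + j ∈ S} + #F :=
    mod_cast card_filter_add_card_filter_sub_mem_le F S j
  have div_le := div_le_div_of_nonneg_right card_le card_pos.le
  rw [add_div, add_div, div_self card_pos.ne'] at div_le
  simp only [relDensity, Set.mem_preimage, Set.mem_ofPred_eq]
  linarith

variable {ι : Type*} {l : Filter ι} [l.NeBot] {F : ι → Finset G} {j : G}

lemma limsup_relDensity_le_preimage_add
    (hF : Tendsto (fun n => relDensity (F n) {i | i - j ∈ F n}) l (𝓝 1)) (S : Set G) :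
    limsup (fun n => relDensity (F n) S) l ≤
      limsup (fun n => relDensity (F n) ((· + j) ⁻¹' S)) l := by
  have bounded_le (S : Set G) : l.IsBoundedUnder (· ≤ ·) fun n => relDensity (F n) S :=
    isBoundedUnder_of ⟨1, fun n => relDensity_le_one (F n) S⟩
  have bounded_ge (S : Set G) : l.IsBoundedUnder (· ≥ ·) fun n => relDensity (F n) S :=
    isBoundedUnder_of ⟨0, fun n => relDensity_nonneg (F n) S⟩
  have tendsto_defect : Tendsto (fun n => 1 - relDensity (F n) {i | i - j ∈ F n}) l (𝓝 0) := by
    simpa using hF.const_sub 1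
  calc limsup (fun n => relDensity (F n) S) l
      ≤ limsup ((fun n => relDensity (F n) ((· + j) ⁻¹' S)) +
          fun n => 1 - relDensity (F n) {i | i - j ∈ F n}) l :=
        limsup_le_limsup
          (.of_forall fun n => relDensity_le_relDensity_preimage_add (F n) S j)
          (bounded_ge S).isCoboundedUnder_le
          (isBoundedUnder_le_add (bounded_le _) tendsto_defect.isBoundedUnder_le)
    _ ≤ limsup (fun n => relDensity (F n) ((· + j) ⁻¹' S)) l +
          limsup (fun n => 1 - relDensity (F n) {i | i - j ∈ F n}) l :=
        limsup_add_le (bounded_ge _) (bounded_le _) tendsto_defect.isCoboundedUnder_le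
          tendsto_defect.isBoundedUnder_le
    _ = limsup (fun n => relDensity (F n) ((· + j) ⁻¹' S)) l := by
        rw [tendsto_defect.limsup_eq, add_zero]

end RelDensity

section Fbox

variable {d : ℕ}

lemma card_Fbox (n : ℕ) : #(Fbox d n) = n ^ d := by
  simp [Fbox, Fintype.card_piFinset]

lemma card_Fbox_filter_sub_mem (n : ℕ) (j : Fin d → ℤ) :
    #{i ∈ Fbox d n | i - j ∈ Fbox d n} = ∏ k, (n - (j k).natAbs) := by
  have overlap_eq : {i ∈ Fbox d n | i - j ∈ Fbox d n} =
      Fintype.piFinset fun k => Icc (max 0 (j k)) (min (n - 1) (n - 1 + j k)) := by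
    ext i
    simp only [Fbox, mem_filter, Fintype.mem_piFinset, mem_Icc, Pi.sub_apply, ← forall_and]
    exact forall_congr' fun k => by omega
  rw [overlap_eq, Fintype.card_piFinset]
  exact prod_congr rfl fun k _ => by rw [Int.card_Icc]; omega

lemma tendsto_natCast_tsub_div_atTop (m : ℕ) :
    Tendsto (fun n : ℕ => ((n - m : ℕ) : ℝ) / n) atTop (𝓝 1) := by
  rw [← tendsto_add_atTop_iff_nat m]
  simpa using tendsto_natCast_div_add_atTop (m : ℝ)

lemma tendsto_relDensity_Fbox_sub_mem (j : Fin d → ℤ) :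
    Tendsto (fun n => relDensity (Fbox d n) {i | i - j ∈ Fbox d n}) atTop (𝓝 1) := by
  have relDensity_eq (n : ℕ) : relDensity (Fbox d n) {i | i - j ∈ Fbox d n} =
      ∏ k, ((n - (j k).natAbs : ℕ) : ℝ) / n := by
    simp only [relDensity, Set.mem_ofPred_eq]
    rw [card_Fbox_filter_sub_mem, card_Fbox]
    simp [prod_div_distrib]
  simp only [relDensity_eq]
  simpa using tendsto_finsetProd univ fun k _ => tendsto_natCast_tsub_div_atTop (j k).natAbs

lemma upperDensity_le_preimage_add (S : Set (Fin d → ℤ)) (j : Fin d → ℤ) :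
    upperDensity d S ≤ upperDensity d ((· + j) ⁻¹' S) :=
  limsup_relDensity_le_preimage_add (tendsto_relDensity_Fbox_sub_mem j) S

lemma upperDensity_preimage_add (S : Set (Fin d → ℤ)) (j : Fin d → ℤ) :
    upperDensity d ((· + j) ⁻¹' S) = upperDensity d S := by
  refine le_antisymm ?_ (upperDensity_le_preimage_add S j)
  simpa [Set.preimage_preimage] using upperDensity_le_preimage_add ((· + j) ⁻¹' S) (-j)

end Fbox

lemma rhoF_apply_apply {d : ℕ} {T : (Fin d → ℤ) → X → X} (hTadd : ∀ i j, T (i + j) = T i ∘ T j)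
    (f : X → ℂ) (j : Fin d → ℤ) (x y : X) :
    rhoF T f (T j x) (T j y) = rhoF T f x y := by
  have preimage_eq (ε : ℝ) : {i | ε < ‖f (T i (T j x)) - f (T i (T j y))‖} =
      (· + j) ⁻¹' {i | ε < ‖f (T i x) - f (T i y)‖} := by
    simp [hTadd]
  simp only [rhoF, preimage_eq, upperDensity_preimage_add]

lemma eventually_le_of_forall_mem_le {ι R : Type*} [Preorder R] [TopologicalSpace X]
    {T : ι → X → X} (hTc : ∀ j, Continuous (T j)) {ρ : X → X → R}
    (hρ : ∀ j x y, ρ x y ≤ ρ (T j x) (T j y)) {x : X} (hx : Dense (Set.range fun j => T j x))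
    {U : Set X} (hU : IsOpen U) (hU_nonempty : U.Nonempty) {ε : R}
    (hUε : ∀ y ∈ U, ∀ z ∈ U, ρ y z ≤ ε) : ∀ᶠ y in 𝓝 x, ρ x y ≤ ε := by
  obtain ⟨_, hxU, j, rfl⟩ := hx.inter_open_nonempty U hU hU_nonempty
  filter_upwards [(hTc j).continuousAt.preimage_mem_nhds (hU.mem_nhds hxU)] with y hyU
  exact (hρ j x y).trans (hUε _ hxU _ hyU)

theorem stmt11_general {d : ℕ} [TopologicalSpace X] (T : (Fin d → ℤ) → X → X)
    (hTc : ∀ j, Continuous (T j)) (hTadd : ∀ i j, T (i + j) = T i ∘ T j)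
    (hmin : ∀ x : X, Dense (Set.range fun j : Fin d → ℤ => T j x)) (f : X → ℂ) :
    (∀ x : X, ∀ ε : ℝ, 0 < ε → ∀ᶠ y in 𝓝 x, rhoF T f x y ≤ ε) ∨
    (∃ ε : ℝ, 0 < ε ∧ ∀ U : Set X, IsOpen U → U.Nonempty →
        ∃ x ∈ U, ∃ y ∈ U, ε < rhoF T f x y) := by
  refine or_iff_not_imp_right.2 fun not_sensitive x ε hε => ?_
  push Not at not_sensitive
  obtain ⟨U, hU, hU_nonempty, hUε⟩ := not_sensitive ε hε
  exact eventually_le_of_forall_mem_le hTc (fun j x y => (rhoF_apply_apply hTadd f j x y).ge)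
    (hmin x) hU hU_nonempty hUε

/-- a minimal TDS is either `f`-mean equicontinuous or `f`-mean sensitive. -/
theorem stmt11 {d : ℕ}
    [MetricSpace X] [CompactSpace X]
    (T : (Fin d → ℤ) → X → X)
    (hTc : ∀ j, Continuous (T j))
    (hTadd : ∀ i j, T (i + j) = T i ∘ T j)
    (hmin : ∀ x : X, Dense (Set.range fun j : Fin d → ℤ => T j x))
    (f : X → ℂ) (hf : Continuous f) :
    (∀ x : X, ∀ ε : ℝ, 0 < ε → ∃ δ : ℝ, 0 < δ ∧
        ∀ y : X, dist x y ≤ δ → rhoF T f x y ≤ ε) ∨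
    (∃ ε : ℝ, 0 < ε ∧ ∀ U : Set X, IsOpen U → U.Nonempty →
        ∃ x ∈ U, ∃ y ∈ U, ε < rhoF T f x y) := by
  simpa only [Metric.nhds_basis_closedBall.eventually_iff, mem_closedBall'] using
    stmt11_general T hTc hTadd hmin f
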